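/- Let V ⊆ E ⊂ R[x] be finite-dimensional vector spaces connected to 1 with V⁺ ⊆ E, and let Λ be a linear form on span(E·E). Assume rank H_Λ^E = rank H_Λ^V = dim V. Then there exists a unique linear form Λ̃ on R[x] which extends Λ (i.e., Λ̃(p) = Λ(p) for all p ∈ span(E·E)) and satisfies rank H_{Λ̃} = rank H_Λ^E, where H_{Λ̃} : R[x] → R[x]* is the (full) Hankel operator H_{Λ̃}(p)(q) = Λ̃(pq). Moreover, ker H_{Λ̃} equals the ideal of R[x] generated by ker H_Λ^E. -/

import Mathlib

open MvPolynomial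

noncomputable section

/-- `R[x] = ℝ[x₁,…,xₙ]`. -/
abbrev PolyR (n : ℕ) := MvPolynomial (Fin n) ℝ

/-- `span(E·E)`, the linear span of products of pairs of elements of `E`. -/
def spanEE {n : ℕ} (E : Submodule ℝ (PolyR n)) : Submodule ℝ (PolyR n) :=
  Submodule.span ℝ (Set.image2 (· * ·) (E : Set (PolyR n)) (E : Set (PolyR n)))

lemma mul_mem_spanEE {n : ℕ} {E : Submodule ℝ (PolyR n)} :
    ∀ p q : PolyR n, p ∈ E → q ∈ E → p * q ∈ spanEE E :=
  fun _ _ hp hq => Submodule.subset_span (Set.mem_image2_of_mem hp hq)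

lemma spanEE_mono {n : ℕ} {E E' : Submodule ℝ (PolyR n)} (h : E ≤ E') :
    spanEE E ≤ spanEE E' :=
  Submodule.span_mono (Set.image2_subset h h)

/-- Finite sums of squares of elements of `E`. -/
def SoS {n : ℕ} (E : Submodule ℝ (PolyR n)) : Set (PolyR n) :=
  (AddSubmonoid.closure ((fun q => q ^ 2) '' (E : Set (PolyR n))) : Set (PolyR n))

/-- The truncated quadratic module `Q_{E,G}` for the constraints `G = (G0, G1)`. -/
def QMod {n : ℕ} (E : Submodule ℝ (PolyR n)) (G0 G1 : Set (PolyR n)) : Set (PolyR n) :=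
  { p | ∃ (s0 s1 : Finset (PolyR n)) (h h' : PolyR n → PolyR n),
      ↑s0 ⊆ G0 ∧ ↑s1 ⊆ G1 ∧
      (∀ g ∈ s0, h g ∈ E ∧ g * h g ∈ spanEE E) ∧
      (∀ g ∈ s1, h' g ∈ SoS E ∧ g * h' g ∈ spanEE E) ∧
      p = (∑ g ∈ s0, g * h g) + ∑ g ∈ s1, g * h' g }

/-- The dual convex set `L_{E,G}` of linear forms on `span(E·E)`. -/
def LSet {n : ℕ} (E : Submodule ℝ (PolyR n)) (G0 G1 : Set (PolyR n)) :
    Set (↥(spanEE E) →ₗ[ℝ] ℝ) :=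
  { Λ | (∀ q : ↥(spanEE E), (q : PolyR n) ∈ QMod E G0 G1 → 0 ≤ Λ q) ∧
        ∀ q : ↥(spanEE E), (q : PolyR n) = 1 → Λ q = 1 }

/-- `f^μ_{E,G}`, as an extended real (so that it is `+∞` when `L_{E,G} = ∅`). -/
def fmu {n : ℕ} (E : Submodule ℝ (PolyR n)) (G0 G1 : Set (PolyR n))
    (f : ↥(spanEE E)) : EReal :=
  sInf ((fun Λ : ↥(spanEE E) →ₗ[ℝ] ℝ => ((Λ f : ℝ) : EReal)) '' LSet E G0 G1)

/-- `f^sos_{E,G}`, as an extended real (so that it is `-∞` when the set is empty). -/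
def fsos {n : ℕ} (E : Submodule ℝ (PolyR n)) (G0 G1 : Set (PolyR n)) (f : PolyR n) : EReal :=
  sSup ((fun γ : ℝ => (γ : EReal)) '' { γ : ℝ | f - C γ ∈ QMod E G0 G1 })

/-- The basic semialgebraic set `S(G)`. -/
def SemiSet {n : ℕ} (G0 G1 : Set (PolyR n)) : Set (Fin n → ℝ) :=
  { x | (∀ g ∈ G0, eval x g = 0) ∧ ∀ g ∈ G1, 0 ≤ eval x g }

/-- The truncated Hankel operator `H_Λ^E : E → E*`, `H_Λ^E(p)(q) = Λ(pq)`, for a linear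
form `Λ` defined on a space `W` containing all products of pairs of elements of `E`. -/
def Hankel {n : ℕ} (W E : Submodule ℝ (PolyR n)) (Λ : ↥W →ₗ[ℝ] ℝ)
    (h : ∀ p q : PolyR n, p ∈ E → q ∈ E → p * q ∈ W) :
    ↥E →ₗ[ℝ] Module.Dual ℝ ↥E :=
  LinearMap.mk₂ ℝ (fun p q : ↥E => Λ ⟨(p : PolyR n) * q, h _ _ p.2 q.2⟩)
    (fun p p' q => by
      rw [← map_add]; exact congrArg Λ (Subtype.ext (by simp [add_mul])))
    (fun c p q => by
      rw [← map_smul]; exact congrArg Λ (Subtype.ext (by simp [smul_mul_assoc])))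
    (fun p q q' => by
      rw [← map_add]; exact congrArg Λ (Subtype.ext (by simp [mul_add])))
    (fun c p q => by
      rw [← map_smul]; exact congrArg Λ (Subtype.ext (by simp [mul_smul_comm])))

/-- The kernel of the truncated Hankel operator, as a subspace of `R[x]`. -/
def HKer {n : ℕ} (W E : Submodule ℝ (PolyR n)) (Λ : ↥W →ₗ[ℝ] ℝ)
    (h : ∀ p q : PolyR n, p ∈ E → q ∈ E → p * q ∈ W) : Submodule ℝ (PolyR n) :=
  (LinearMap.ker (Hankel W E Λ h)).map E.subtype

/-- The rank of the truncated Hankel operator. -/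
def HRank {n : ℕ} (W E : Submodule ℝ (PolyR n)) (Λ : ↥W →ₗ[ℝ] ℝ)
    (h : ∀ p q : PolyR n, p ∈ E → q ∈ E → p * q ∈ W) : Cardinal :=
  Module.rank ℝ ↥(LinearMap.range (Hankel W E Λ h))

/-- The full Hankel operator `H_Λ : R[x] → R[x]*` of a linear form on `R[x]`. -/
def FullHankel {n : ℕ} (Λ : PolyR n →ₗ[ℝ] ℝ) :
    PolyR n →ₗ[ℝ] Module.Dual ℝ (PolyR n) :=
  LinearMap.compr₂ (LinearMap.mul ℝ (PolyR n)) Λ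

/-- The prolongation `E⁺ = E + x₁E + … + xₙE`. -/
def prolong {n : ℕ} (E : Submodule ℝ (PolyR n)) : Submodule ℝ (PolyR n) :=
  E ⊔ ⨆ i : Fin n, Submodule.map (LinearMap.mulLeft ℝ (X i : PolyR n)) E

/-- A subspace `E` is connected to 1. -/
def ConnectedTo1 {n : ℕ} (E : Submodule ℝ (PolyR n)) : Prop :=
  (1 : PolyR n) ∈ E ∧ ∃ (k : ℕ) (c : ℕ → Submodule ℝ (PolyR n)),
    c 0 = Submodule.span ℝ {1} ∧ c k = E ∧
    ∀ i < k, c i ≤ c (i + 1) ∧ c (i + 1) ≤ prolong (c i)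

/-- Degree `|α|` of an exponent vector. -/
def degOf {n : ℕ} (α : Fin n →₀ ℕ) : ℕ := α.sum fun _ e => e

/-- `B⁺ = B ∪ x₁B ∪ … ∪ xₙB` for a set of monomials (exponent vectors). -/
def Bplus {n : ℕ} (B : Set (Fin n →₀ ℕ)) : Set (Fin n →₀ ℕ) :=
  B ∪ ⋃ i : Fin n, (fun α => α + Finsupp.single i 1) '' B

/-- The border `∂B = B⁺ \ B`. -/
def BBorder {n : ℕ} (B : Set (Fin n →₀ ℕ)) : Set (Fin n →₀ ℕ) :=
  Bplus B \ B

/-- A set of monomials connected to 1. -/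
def MonConnectedTo1 {n : ℕ} (B : Set (Fin n →₀ ℕ)) : Prop :=
  0 ∈ B ∧ ∀ α ∈ B, α ≠ 0 → ∃ i : Fin n, ∃ β ∈ B, α = β + Finsupp.single i 1

/-- `⟨B⟩_t`: the span of the monomials of `B` of degree at most `t`. -/
def spanB {n : ℕ} (B : Set (Fin n →₀ ℕ)) (t : ℕ) : Submodule ℝ (PolyR n) :=
  Submodule.span ℝ ((fun α => (monomial α (1 : ℝ) : PolyR n)) '' { α ∈ B | degOf α ≤ t })

/-- `⟨F|t⟩`: the span of `{ x^α f : f ∈ F, deg f ≤ t, |α| ≤ t − deg f }`. -/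
def FSpan {n : ℕ} (F : Finset (PolyR n)) (t : ℕ) : Submodule ℝ (PolyR n) :=
  Submodule.span ℝ { p : PolyR n | ∃ f ∈ F, ∃ α : Fin n →₀ ℕ,
    f.totalDegree ≤ t ∧ degOf α + f.totalDegree ≤ t ∧ p = monomial α (1 : ℝ) * f }

/-- `F` is a border basis for `B` in degree `t`. -/
def IsBorderBasis {n : ℕ} (B : Set (Fin n →₀ ℕ)) (F : Finset (PolyR n)) (t : ℕ) : Prop :=
  (∀ f ∈ F, f.totalDegree ≤ t →
      ((↑f.support : Set (Fin n →₀ ℕ)) ⊆ Bplus B ∧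
       (∃! α, α ∈ f.support ∧ α ∈ BBorder B) ∧
       ∀ α ∈ f.support, α ∈ BBorder B → coeff α f = 1)) ∧
  (∀ f ∈ F, f.totalDegree ≤ t → ∀ f' ∈ F, f'.totalDegree ≤ t →
      ∀ α, (α ∈ f.support ∧ α ∈ BBorder B) → (α ∈ f'.support ∧ α ∈ BBorder B) → f = f') ∧
  (∀ α ∈ BBorder B, degOf α ≤ t → ∃ f ∈ F, f.totalDegree ≤ t ∧ α ∈ f.support) ∧
  Disjoint (spanB B t) (FSpan F t) ∧
  spanB B t ⊔ FSpan F t = restrictTotalDegree (Fin n) ℝ t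

/-- `F` is a graded border basis for `B` in degree `t`. -/
def IsGradedBorderBasis {n : ℕ} (B : Set (Fin n →₀ ℕ)) (F : Finset (PolyR n)) (t : ℕ) : Prop :=
  IsBorderBasis B F t ∧
  ∀ f ∈ F, ∀ α ∈ f.support, α ∈ BBorder B → degOf α = f.totalDegree

lemma mul_mem_rtd {n t : ℕ} :
    ∀ p q : PolyR n, p ∈ restrictTotalDegree (Fin n) ℝ t →
      q ∈ restrictTotalDegree (Fin n) ℝ t →
      p * q ∈ restrictTotalDegree (Fin n) ℝ (2 * t) := by
  intro p q hp hq
  rw [mem_restrictTotalDegree] at hp hq ⊢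
  calc (p * q).totalDegree ≤ p.totalDegree + q.totalDegree := totalDegree_mul p q
    _ ≤ t + t := add_le_add hp hq
    _ = 2 * t := (two_mul t).symm

lemma spanB_le {n : ℕ} (B : Set (Fin n →₀ ℕ)) (t : ℕ) :
    spanB B t ≤ restrictTotalDegree (Fin n) ℝ t := by
  rw [spanB, Submodule.span_le]
  rintro p ⟨α, hα, rfl⟩
  rw [SetLike.mem_coe, mem_restrictTotalDegree]
  exact le_of_eq_of_le (totalDegree_monomial α one_ne_zero) hα.2

/-- The vanishing ideal of a finite family of points. -/
def vanishingIdeal {n r : ℕ} (ξ : Fin r → (Fin n → ℝ)) : Ideal (PolyR n) where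
  carrier := { p : PolyR n | ∀ i, eval (ξ i) p = 0 }
  add_mem' := by
    intro a b ha hb i
    simp [ha i, hb i]
  zero_mem' := by intro i; simp
  smul_mem' := by
    intro c p hp i
    simp [smul_eq_mul, hp i]

/-! The rank hypotheses say that `E = V + ker H_L^E` and that the form `L (p q)` is nondegenerate on
`V`. Let `π` be the orthogonal projection onto `V` for this form. Since `V⁺ ⊆ E`, compressing the
multiplications by the variables to `V` with `π` gives commuting operators, hence an action `Φ` of
the polynomial ring on `V`. Connectedness of `E` to `1` yields `Φ(p) 1 = π(p)` for all `p ∈ E`, so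
`Φ(·) 1` is the identity on `V` and vanishes on the ideal `I` generated by `ker H_L^E`; thus
`V ∩ I = 0`. From `V⁺ ⊆ E` and `1 ∈ V` one gets `V + I = R[x]`. The extension is `L` on `V` and `0`
on `I`, and an extension has rank `dim V` exactly when the kernel of its Hankel operator is `I`. -/

universe u

section Rank

variable {F : Type*} {M N : Type u} [DivisionRing F] [AddCommGroup M] [Module F M]
  [AddCommGroup N] [Module F N]

lemma ker_eq_bot_of_rank_eq [FiniteDimensional F M] {f : M →ₗ[F] N}
    (hf : f.rank = Module.rank F M) : LinearMap.ker f = ⊥ := by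
  have hsum := f.finrank_range_add_finrank_ker
  rwa [Module.finrank, ← LinearMap.rank, hf, ← Module.finrank, Nat.add_eq_left,
    Submodule.finrank_eq_zero] at hsum

lemma rank_eq_iff_codisjoint_ker {f : M →ₗ[F] N} {V : Submodule F M}
    [FiniteDimensional F V] (hV : Disjoint V (LinearMap.ker f)) :
    f.rank = Module.rank F V ↔ Codisjoint V (LinearMap.ker f) := by
  have hrank : (f.domRestrict V).rank = Module.rank F V :=
    rank_range_of_injective _ (LinearMap.injective_domRestrict_iff.mpr hV)
  rw [LinearMap.rank, LinearMap.range_domRestrict] at hrank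
  rw [← Submodule.map_eq_range_iff]
  refine ⟨fun hf => ?_, fun hf => by rwa [hf] at hrank⟩
  have : FiniteDimensional F (LinearMap.range f) :=
    Module.rank_lt_aleph0_iff.mp (hf.trans_lt (Module.rank_lt_aleph0 F V))
  refine Submodule.eq_of_le_of_finrank_eq LinearMap.map_le_range ?_
  rw [Module.finrank, Module.finrank, hrank, ← hf]

end Rank

section PolynomialRing

variable {R S σ : Type*} [CommSemiring R] [Ring S] [Algebra R S]

open scoped IsMulCommutative in
lemma exists_mvPolynomial_algHom_of_commute {m : σ → S} (hm : ∀ i j, Commute (m i) (m j)) :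
    ∃ Φ : MvPolynomial σ R →ₐ[R] S, ∀ i, Φ (X i) = m i := by
  have : IsMulCommutative (Algebra.adjoin R (Set.range m)) :=
    Algebra.isMulCommutative_adjoin R (by rintro _ ⟨i, rfl⟩ _ ⟨j, rfl⟩; exact hm i j)
  let y : σ → Algebra.adjoin R (Set.range m) := fun i => ⟨m i, Algebra.subset_adjoin ⟨i, rfl⟩⟩
  exact ⟨(Algebra.adjoin R (Set.range m)).val.comp (aeval y), fun i => by
    rw [AlgHom.comp_apply, aeval_X, Subalgebra.coe_val]⟩

lemma eq_top_of_X_mul_mem {M : Submodule R (MvPolynomial σ R)} (h1 : 1 ∈ M)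
    (hX : ∀ i, ∀ p ∈ M, X i * p ∈ M) : M = ⊤ := by
  refine eq_top_iff.mpr fun p _ => ?_
  induction p using MvPolynomial.induction_on with
  | C a => simpa only [C_eq_smul_one] using M.smul_mem a h1
  | add p q hp hq => exact M.add_mem (hp trivial) (hq trivial)
  | mul_X p i hp => exact mul_comm p (X i) ▸ hX i p (hp trivial)

end PolynomialRing

section Hankel

variable {R A : Type*} [CommRing R] [CommRing A] [Algebra R A]
  {L T : A →ₗ[R] R} {V E : Submodule R A}

/-- The Hankel operator of a linear form `L` on an algebra, as the bilinear form
`(p, q) ↦ L (p q)`. The truncated operator `H_L^E` is its restriction to `E`. -/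
def hankelForm (L : A →ₗ[R] R) : LinearMap.BilinForm R A :=
  (LinearMap.mul R A).compr₂ L

lemma hankelForm_apply (p q : A) : hankelForm L p q = L (p * q) := rfl

lemma hankelForm_isSymm : (hankelForm L).IsSymm :=
  ⟨fun p q => by simp only [hankelForm_apply, mul_comm]⟩

/-- The kernel of the full Hankel operator of `L`, as an ideal. -/
def hankelIdeal (L : A →ₗ[R] R) : Ideal A :=
  { LinearMap.ker (hankelForm L) with
    smul_mem' := fun c p hp => LinearMap.ext fun q => by
      rw [smul_eq_mul, hankelForm_apply, mul_comm c, mul_assoc]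
      exact LinearMap.congr_fun hp (c * q) }

lemma mem_hankelIdeal {p : A} : p ∈ hankelIdeal L ↔ ∀ q, L (p * q) = 0 :=
  LinearMap.ext_iff

lemma le_hankelIdeal_iff {I : Ideal A} : I ≤ hankelIdeal L ↔ ∀ p ∈ I, L p = 0 :=
  ⟨fun h p hp => by simpa only [mul_one] using mem_hankelIdeal.mp (h hp) 1,
    fun h p hp => mem_hankelIdeal.mpr fun q => h _ (I.mul_mem_right q hp)⟩

/-- The kernel of the truncated Hankel operator `H_L^E`, as a subspace of the whole algebra. -/
def truncatedKer (L : A →ₗ[R] R) (E : Submodule R A) : Submodule R A :=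
  (LinearMap.ker ((hankelForm L).restrict E)).map E.subtype

lemma mem_truncatedKer {p : A} : p ∈ truncatedKer L E ↔ p ∈ E ∧ ∀ q ∈ E, L (p * q) = 0 := by
  constructor
  · rintro ⟨k, hk, rfl⟩
    exact ⟨k.2, fun q hq => LinearMap.congr_fun hk ⟨q, hq⟩⟩
  · rintro ⟨hp, h⟩
    exact ⟨⟨p, hp⟩, LinearMap.ext fun q => h q q.2, rfl⟩

lemma nondegenerate_restrict_hankelForm_iff :
    ((hankelForm L).restrict V).Nondegenerate ↔ truncatedKer L V = ⊥ := by
  rw [truncatedKer, (Submodule.map_injective_of_injective V.subtype_injective).eq_iff'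
    (Submodule.map_bot _), ← LinearMap.separatingLeft_iff_ker_eq_bot]
  exact (hankelForm_isSymm.isRefl.domRestrict V).nondegenerate_iff_separatingLeft

/-- `H_L^E` is a flat extension of `H_L^V`: over a field and for finite-dimensional `V ⊆ E` this
means `rank H_L^E = rank H_L^V = dim V`. -/
structure IsFlat (L : A →ₗ[R] R) (V E : Submodule R A) : Prop where
  truncatedKer_eq_bot : truncatedKer L V = ⊥
  sup_truncatedKer : V ⊔ truncatedKer L E = E

namespace IsFlat

lemma le (h : IsFlat L V E) : V ≤ E := le_sup_left.trans h.sup_truncatedKer.le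

lemma nondegenerate_restrict (h : IsFlat L V E) : ((hankelForm L).restrict V).Nondegenerate :=
  nondegenerate_restrict_hankelForm_iff.mpr h.truncatedKer_eq_bot

lemma exists_sub_mem_truncatedKer (h : IsFlat L V E) {p : A} (hp : p ∈ E) :
    ∃ v ∈ V, p - v ∈ truncatedKer L E := by
  obtain ⟨v, hv, k, hk, rfl⟩ := Submodule.mem_sup.mp (h.sup_truncatedKer.ge hp)
  exact ⟨v, hv, by rwa [add_sub_cancel_left]⟩

lemma eq_of_forall_mul (h : IsFlat L V E) {u w : A} (hu : u ∈ V) (hw : w ∈ V)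
    (huw : ∀ q ∈ V, L (u * q) = L (w * q)) : u = w := by
  have hmem : u - w ∈ truncatedKer L V := mem_truncatedKer.mpr ⟨V.sub_mem hu hw, fun q hq => by
    rw [sub_mul, map_sub, huw q hq, sub_self]⟩
  rwa [h.truncatedKer_eq_bot, Submodule.mem_bot, sub_eq_zero] at hmem

lemma apply_mul_eq_of_forall_mem (h : IsFlat L V E)
    (hT : ∀ k ∈ truncatedKer L E, k ∈ hankelIdeal T) {p q : A} (hp : p ∈ E) (hq : q ∈ E)
    (hpV : ∀ v ∈ V, T (p * v) = L (p * v)) :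
    T (p * q) = L (p * q) := by
  obtain ⟨v, hv, k, hk, rfl⟩ := Submodule.mem_sup.mp (h.sup_truncatedKer.ge hq)
  have hTk : T (p * k) = 0 := mul_comm p k ▸ mem_hankelIdeal.mp (hT k hk) p
  have hLk : L (p * k) = 0 := mul_comm p k ▸ (mem_truncatedKer.mp hk).2 p hp
  rw [mul_add, map_add, map_add, hTk, hLk, hpV v hv]

lemma mem_hankelIdeal_of_codisjoint (h : IsFlat L V E)
    (hTL : ∀ p ∈ E, ∀ q ∈ E, T (p * q) = L (p * q))
    (hV : Codisjoint V (LinearMap.ker (hankelForm T))) :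
    ∀ k ∈ truncatedKer L E, k ∈ hankelIdeal T := by
  intro k hk
  obtain ⟨v, z, hv, hz, rfl⟩ := Submodule.codisjoint_iff_exists_add_eq.mp hV k
  have hv0 : v = 0 := h.eq_of_forall_mul hv V.zero_mem fun q hq =>
    calc L (v * q) = T (v * q) := (hTL v (h.le hv) q (h.le hq)).symm
      _ = T ((v + z) * q) := by rw [add_mul, map_add, mem_hankelIdeal.mp hz q, add_zero]
      _ = L ((v + z) * q) := hTL _ (mem_truncatedKer.mp hk).1 q (h.le hq)
      _ = 0 := (mem_truncatedKer.mp hk).2 q (h.le hq)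
      _ = L (0 * q) := by rw [zero_mul, map_zero]
  rwa [hv0, zero_add]

lemma disjoint_ker_hankelForm (h : IsFlat L V E)
    (hTL : ∀ p ∈ E, ∀ q ∈ E, T (p * q) = L (p * q)) :
    Disjoint V (LinearMap.ker (hankelForm T)) := by
  refine Submodule.disjoint_def.mpr fun v hv hker => ?_
  refine h.eq_of_forall_mul hv V.zero_mem fun q hq => ?_
  rw [← hTL v (h.le hv) q (h.le hq), mem_hankelIdeal.mp hker q, zero_mul, map_zero]

end IsFlat

end Hankel

lemma isFlat_of_rank_eq {K A : Type u} [Field K] [CommRing A] [Algebra K A] {L : A →ₗ[K] K}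
    {V E : Submodule K A} [FiniteDimensional K V] (hVE : V ≤ E)
    (hV : LinearMap.rank ((hankelForm L).restrict V) = Module.rank K V)
    (hE : LinearMap.rank ((hankelForm L).restrict E) = Module.rank K V) :
    IsFlat L V E := by
  have hbot : truncatedKer L V = ⊥ := by
    rw [truncatedKer, ker_eq_bot_of_rank_eq hV, Submodule.map_bot]
  let e : V.submoduleOf E ≃ₗ[K] V := Submodule.submoduleOfEquivOfLe hVE
  have : FiniteDimensional K (V.submoduleOf E) := e.symm.finiteDimensional
  have hdisj : Disjoint (V.submoduleOf E) (LinearMap.ker ((hankelForm L).restrict E)) := by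
    refine Submodule.disjoint_def.mpr fun v hv hker => Subtype.ext ?_
    refine (Submodule.mem_bot K).mp (hbot ▸ mem_truncatedKer.mpr ⟨hv, fun q hq => ?_⟩)
    exact LinearMap.congr_fun hker ⟨q, hVE hq⟩
  have hcodisj := (rank_eq_iff_codisjoint_ker hdisj).mp (hE.trans e.rank_eq.symm)
  refine ⟨hbot, ?_⟩
  calc V ⊔ truncatedKer L E
      = (V.submoduleOf E ⊔ LinearMap.ker ((hankelForm L).restrict E)).map E.subtype := by
        rw [Submodule.map_sup, Submodule.submoduleOf, Submodule.map_comap_subtype,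
          inf_eq_right.mpr hVE, truncatedKer]
    _ = E := by rw [hcodisj.eq_top, Submodule.map_subtype_top]

namespace IsFlat

section Projection

variable {K A : Type*} [Field K] [CommRing A] [Algebra K A] {L : A →ₗ[K] K}
  {V E : Submodule K A} [FiniteDimensional K V]

/-- The orthogonal projection of the algebra onto `V` with respect to the form `L (p q)`, obtained
from the self-duality of `V`. On `E` it is the projection along the kernel of `H_L^E`. -/
def proj (h : IsFlat L V E) : A →ₗ[K] V :=
  (((hankelForm L).restrict V).toDual h.nondegenerate_restrict).symm.toLinearMap ∘ₗ
    (hankelForm L).domRestrict₂ V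

lemma apply_proj_mul (h : IsFlat L V E) (p : A) {w : A} (hw : w ∈ V) :
    L (h.proj p * w) = L (p * w) :=
  LinearMap.BilinForm.apply_toDual_symm_apply (hB := h.nondegenerate_restrict)
    ((hankelForm L).domRestrict₂ V p) ⟨w, hw⟩

lemma proj_eq_iff (h : IsFlat L V E) {p : A} {v : V} :
    h.proj p = v ↔ ∀ w ∈ V, L (p * w) = L (v * w) := by
  refine ⟨?_, fun hpv => Subtype.ext (h.eq_of_forall_mul (h.proj p).2 v.2 fun w hw => ?_)⟩
  · rintro rfl w hw
    exact (h.apply_proj_mul p hw).symm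
  · rw [h.apply_proj_mul p hw, hpv w hw]

lemma proj_coe (h : IsFlat L V E) (v : V) : h.proj v = v :=
  h.proj_eq_iff.mpr fun _ _ => rfl

lemma sub_proj_mem_truncatedKer (h : IsFlat L V E) {p : A} (hp : p ∈ E) :
    p - h.proj p ∈ truncatedKer L E := by
  obtain ⟨v, hv, hpv⟩ := h.exists_sub_mem_truncatedKer hp
  have hproj : h.proj p = ⟨v, hv⟩ := h.proj_eq_iff.mpr fun w hw => by
    rw [← sub_eq_zero, ← map_sub, ← sub_mul, (mem_truncatedKer.mp hpv).2 w (h.le hw)]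
  rwa [hproj]

lemma proj_eq_zero_of_mem_truncatedKer (h : IsFlat L V E) {k : A} (hk : k ∈ truncatedKer L E) :
    h.proj k = 0 :=
  h.proj_eq_iff.mpr fun w hw => by
    rw [(mem_truncatedKer.mp hk).2 w (h.le hw), Submodule.coe_zero, zero_mul, map_zero]

lemma apply_proj_mul_of_mem (h : IsFlat L V E) {p q : A} (hp : p ∈ E) (hq : q ∈ E) :
    L (h.proj p * q) = L (p * q) := by
  have hpq := (mem_truncatedKer.mp (h.sub_proj_mem_truncatedKer hp)).2 q hq
  rw [sub_mul, map_sub, sub_eq_zero] at hpq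
  exact hpq.symm

/-- Multiplication by `a` compressed to `V`. -/
def compressedMul (h : IsFlat L V E) (a : A) : Module.End K V :=
  h.proj ∘ₗ LinearMap.mulLeft K a ∘ₗ V.subtype

lemma compressedMul_apply (h : IsFlat L V E) (a : A) (v : V) :
    h.compressedMul a v = h.proj (a * v) := rfl

lemma apply_compressedMul_mul (h : IsFlat L V E) {a p w : A} (ha : ∀ v ∈ V, a * v ∈ E)
    (hp : p ∈ E) (hw : w ∈ V) : L (h.compressedMul a (h.proj p) * w) = L (a * p * w) :=
  calc L (h.compressedMul a (h.proj p) * w)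
      = L (h.proj p * (a * w)) := by
        rw [compressedMul_apply, h.apply_proj_mul _ hw, mul_assoc, mul_left_comm]
    _ = L (p * (a * w)) := h.apply_proj_mul_of_mem hp (ha w hw)
    _ = L (a * p * w) := by rw [mul_left_comm, mul_assoc]

lemma compressedMul_proj (h : IsFlat L V E) {a p : A} (ha : ∀ v ∈ V, a * v ∈ E) (hp : p ∈ E) :
    h.compressedMul a (h.proj p) = h.proj (a * p) :=
  (h.proj_eq_iff.mpr fun _ hw => (h.apply_compressedMul_mul ha hp hw).symm).symm

lemma commute_compressedMul (h : IsFlat L V E) {a b : A} (ha : ∀ v ∈ V, a * v ∈ E)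
    (hb : ∀ v ∈ V, b * v ∈ E) : Commute (h.compressedMul a) (h.compressedMul b) :=
  LinearMap.ext fun v => by
    rw [Module.End.mul_apply, Module.End.mul_apply, h.compressedMul_apply b,
      h.compressedMul_apply a v, h.compressedMul_proj ha (hb v v.2),
      h.compressedMul_proj hb (ha v v.2), mul_left_comm]

end Projection

end IsFlat

section Polynomial

variable {σ R : Type*} [CommRing R] {L T : MvPolynomial σ R →ₗ[R] R}
  {V E : Submodule R (MvPolynomial σ R)}

/-- Connectedness to `1` as an induction principle: a subspace that contains `1`, and contains
`X i * p` together with each of its elements `p` in `E`, contains `E`. A chain from the constants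
to `E` provides this principle, see `ConnectedTo1.isConnectedToOne`. -/
def IsConnectedToOne (E : Submodule R (MvPolynomial σ R)) : Prop :=
  ∀ S : Submodule R (MvPolynomial σ R), 1 ∈ S → (∀ i, ∀ p ∈ E, p ∈ S → X i * p ∈ S) → E ≤ S

namespace IsFlat

lemma codisjoint_span_truncatedKer (h : IsFlat L V E) (h1 : 1 ∈ V)
    (hVX : ∀ i, ∀ v ∈ V, X i * v ∈ E) :
    Codisjoint V ((Ideal.span (truncatedKer L E : Set (MvPolynomial σ R))).restrictScalars R) := by
  set I := Ideal.span (truncatedKer L E : Set (MvPolynomial σ R))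
  have hES : E ≤ V ⊔ I.restrictScalars R :=
    h.sup_truncatedKer.ge.trans (sup_le_sup_left (fun _ hk => Ideal.subset_span hk) V)
  refine codisjoint_iff.mpr (eq_top_of_X_mul_mem (le_sup_left (a := V) h1) fun i p hp => ?_)
  obtain ⟨v, hv, z, hz, rfl⟩ := Submodule.mem_sup.mp hp
  rw [mul_add]
  exact add_mem (hES (hVX i v hv)) (le_sup_right (a := V) (I.mul_mem_left (X i) hz))

lemma apply_mul_eq (h : IsFlat L V E) (hE : IsConnectedToOne E)
    (hVX : ∀ i, ∀ v ∈ V, X i * v ∈ E) (hT : ∀ k ∈ truncatedKer L E, k ∈ hankelIdeal T)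
    (hTV : ∀ v ∈ V, T v = L v) {p q : MvPolynomial σ R} (hp : p ∈ E) (hq : q ∈ E) :
    T (p * q) = L (p * q) := by
  let S : Submodule R (MvPolynomial σ R) :=
    LinearMap.eqLocus ((hankelForm T).domRestrict₂ V) ((hankelForm L).domRestrict₂ V)
  have mem_S {p : MvPolynomial σ R} : p ∈ S ↔ ∀ v ∈ V, T (p * v) = L (p * v) :=
    ⟨fun hp v hv => LinearMap.congr_fun hp ⟨v, hv⟩, fun hp => LinearMap.ext fun v => hp v v.2⟩
  have hES : E ≤ S := hE S (mem_S.mpr fun v hv => by rw [one_mul, hTV v hv]) fun i p hp hpS =>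
    mem_S.mpr fun v hv => by
      rw [mul_comm (X i), mul_assoc]
      exact h.apply_mul_eq_of_forall_mem hT hp (hVX i v hv) (mem_S.mp hpS)
  exact h.apply_mul_eq_of_forall_mem hT hp hq (mem_S.mp (hES hp))

lemma hankelIdeal_eq_span (h : IsFlat L V E) (h1 : 1 ∈ V) (hVX : ∀ i, ∀ v ∈ V, X i * v ∈ E)
    (hTL : ∀ p ∈ E, ∀ q ∈ E, T (p * q) = L (p * q))
    (hT : ∀ k ∈ truncatedKer L E, k ∈ hankelIdeal T) :
    hankelIdeal T = Ideal.span (truncatedKer L E : Set (MvPolynomial σ R)) := by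
  have hle : Ideal.span (truncatedKer L E : Set (MvPolynomial σ R)) ≤ hankelIdeal T :=
    Ideal.span_le.mpr hT
  refine (Submodule.restrictScalars_injective R _ _ ?_).symm
  refine eq_of_le_of_inf_le_of_le_sup (z := V) (fun _ hp => hle hp) ?_ ?_
  · exact (h.disjoint_ker_hankelForm hTL).symm.le_bot.trans bot_le
  · exact le_top.trans (h.codisjoint_span_truncatedKer h1 hVX).symm.top_le

lemma extension_unique (h : IsFlat L V E) (h1 : 1 ∈ V) (hVX : ∀ i, ∀ v ∈ V, X i * v ∈ E)
    {T' : MvPolynomial σ R →ₗ[R] R} (hV : ∀ v ∈ V, T v = T' v)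
    (hT : hankelIdeal T = Ideal.span (truncatedKer L E : Set (MvPolynomial σ R)))
    (hT' : hankelIdeal T' = Ideal.span (truncatedKer L E : Set (MvPolynomial σ R))) : T = T' :=
  LinearMap.ext_on_codisjoint (h.codisjoint_span_truncatedKer h1 hVX) hV fun z hz =>
    (le_hankelIdeal_iff.mp hT.ge z hz).trans (le_hankelIdeal_iff.mp hT'.ge z hz).symm

end IsFlat

end Polynomial

namespace IsFlat

section Extension

variable {σ K : Type*} [Field K] {L : MvPolynomial σ K →ₗ[K] K}
  {V E : Submodule K (MvPolynomial σ K)} [FiniteDimensional K V]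

lemma exists_algHom_apply_one (h : IsFlat L V E) (h1 : 1 ∈ V) (hE : IsConnectedToOne E)
    (hVX : ∀ i, ∀ v ∈ V, X i * v ∈ E) :
    ∃ Φ : MvPolynomial σ K →ₐ[K] Module.End K V, ∀ p ∈ E, Φ p ⟨1, h1⟩ = h.proj p := by
  obtain ⟨Φ, hΦ⟩ := exists_mvPolynomial_algHom_of_commute (R := K)
    (m := fun i => h.compressedMul (X i)) fun i j => h.commute_compressedMul (hVX i) (hVX j)
  refine ⟨Φ, hE (LinearMap.eqLocus (Φ.toLinearMap.flip ⟨1, h1⟩) h.proj) ?_ fun i p hp hpS => ?_⟩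
  · rw [LinearMap.mem_eqLocus, LinearMap.flip_apply, AlgHom.toLinearMap_apply, map_one,
      Module.End.one_apply]
    exact (h.proj_coe ⟨1, h1⟩).symm
  · rw [LinearMap.mem_eqLocus, LinearMap.flip_apply, AlgHom.toLinearMap_apply] at hpS ⊢
    rw [map_mul, Module.End.mul_apply, hpS, hΦ, h.compressedMul_proj (hVX i) hp]

lemma disjoint_span_truncatedKer (h : IsFlat L V E) (h1 : 1 ∈ V) (hE : IsConnectedToOne E)
    (hVX : ∀ i, ∀ v ∈ V, X i * v ∈ E) :
    Disjoint V ((Ideal.span (truncatedKer L E : Set (MvPolynomial σ K))).restrictScalars K) := by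
  obtain ⟨Φ, hΦ⟩ := h.exists_algHom_apply_one h1 hE hVX
  have hzero : ∀ p ∈ Ideal.span (truncatedKer L E : Set (MvPolynomial σ K)),
      Φ p ⟨1, h1⟩ = 0 := by
    intro p hp
    induction hp using Submodule.span_induction with
    | mem k hk => rw [hΦ k (mem_truncatedKer.mp hk).1, h.proj_eq_zero_of_mem_truncatedKer hk]
    | zero => rw [map_zero, LinearMap.zero_apply]
    | add p q _ _ hp hq => rw [map_add, LinearMap.add_apply, hp, hq, add_zero]
    | smul a p _ hp => rw [smul_eq_mul, map_mul, Module.End.mul_apply, hp, map_zero]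
  refine Submodule.disjoint_def.mpr fun v hv hvI => ?_
  have hproj : (⟨v, hv⟩ : V) = 0 :=
    calc (⟨v, hv⟩ : V) = h.proj v := (h.proj_coe ⟨v, hv⟩).symm
      _ = Φ v ⟨1, h1⟩ := (hΦ v (h.le hv)).symm
      _ = 0 := hzero v hvI
  exact congrArg Subtype.val hproj

lemma exists_extension (h : IsFlat L V E) (h1 : 1 ∈ V)
    (hE : IsConnectedToOne E) (hVX : ∀ i, ∀ v ∈ V, X i * v ∈ E) :
    ∃ T : MvPolynomial σ K →ₗ[K] K, (∀ p ∈ E, ∀ q ∈ E, T (p * q) = L (p * q)) ∧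
      hankelIdeal T = Ideal.span (truncatedKer L E : Set (MvPolynomial σ K)) := by
  have hcompl := IsCompl.mk (h.disjoint_span_truncatedKer h1 hE hVX)
    (h.codisjoint_span_truncatedKer h1 hVX)
  let T : MvPolynomial σ K →ₗ[K] K := L ∘ₗ V.subtype ∘ₗ V.projectionOnto _ hcompl
  have hTV : ∀ v ∈ V, T v = L v := fun v hv =>
    congrArg (fun w : V => L w) (Submodule.projectionOnto_apply_of_mem_left hcompl hv)
  have hTI : ∀ p ∈ Ideal.span (truncatedKer L E : Set (MvPolynomial σ K)), T p = 0 := fun p hp => by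
    rw [LinearMap.comp_apply, LinearMap.comp_apply,
      (Submodule.projectionOnto_apply_eq_zero_iff hcompl).mpr hp, map_zero, map_zero]
  have hT := Ideal.span_le.mp (le_hankelIdeal_iff.mpr hTI)
  have hTL : ∀ p ∈ E, ∀ q ∈ E, T (p * q) = L (p * q) := fun p hp q hq =>
    h.apply_mul_eq hE hVX hT hTV hp hq
  exact ⟨T, hTL, h.hankelIdeal_eq_span h1 hVX hTL hT⟩

end Extension

lemma rank_hankelForm_eq_iff {σ K : Type u} [Field K] {L T : MvPolynomial σ K →ₗ[K] K}
    {V E : Submodule K (MvPolynomial σ K)} [FiniteDimensional K V] (h : IsFlat L V E)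
    (h1 : 1 ∈ V) (hVX : ∀ i, ∀ v ∈ V, X i * v ∈ E)
    (hTL : ∀ p ∈ E, ∀ q ∈ E, T (p * q) = L (p * q)) :
    LinearMap.rank (hankelForm T) = Module.rank K V ↔
      hankelIdeal T = Ideal.span (truncatedKer L E : Set (MvPolynomial σ K)) := by
  rw [rank_eq_iff_codisjoint_ker (h.disjoint_ker_hankelForm hTL)]
  refine ⟨fun hV => h.hankelIdeal_eq_span h1 hVX hTL (h.mem_hankelIdeal_of_codisjoint hTL hV),
    fun hT => ?_⟩
  have hV := h.codisjoint_span_truncatedKer h1 hVX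
  rwa [← hT] at hV

end IsFlat

lemma X_mul_mem_prolong {n : ℕ} {V : Submodule ℝ (PolyR n)} {p : PolyR n} (hp : p ∈ V)
    (i : Fin n) : X i * p ∈ prolong V :=
  le_sup_right (a := V) (Submodule.mem_iSup_of_mem i ⟨p, hp, rfl⟩)

lemma prolong_le {n : ℕ} {V S : Submodule ℝ (PolyR n)} (h : V ≤ S)
    (hX : ∀ i, ∀ p ∈ V, X i * p ∈ S) : prolong V ≤ S := by
  refine sup_le h (iSup_le fun i => ?_)
  rintro _ ⟨p, hp, rfl⟩
  exact hX i p hp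

lemma ConnectedTo1.isConnectedToOne {n : ℕ} {E : Submodule ℝ (PolyR n)} (hE : ConnectedTo1 E) :
    IsConnectedToOne E := by
  intro S h1 hX
  obtain ⟨-, k, c, h0, hk, hc⟩ := hE
  have hcE : ∀ i ≤ k, c i ≤ E := fun i hi => by
    induction hi using Nat.decreasingInduction with
    | self => exact hk.le
    | of_succ j hj ih => exact (hc j hj).1.trans ih
  have hcS : ∀ i ≤ k, c i ≤ S := fun i => by
    induction i with
    | zero => exact fun _ => h0.trans_le ((Submodule.span_singleton_le_iff_mem 1 S).mpr h1)
    | succ i ih =>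
      intro hi
      have hS := ih (Nat.le_of_succ_le hi)
      exact (hc i hi).2.trans
        (prolong_le hS fun j p hp => hX j p (hcE i (Nat.le_of_succ_le hi) hp) (hS hp))
  exact hk ▸ hcS k le_rfl

lemma spanEE_eq_mul {n : ℕ} (E : Submodule ℝ (PolyR n)) : spanEE E = E * E :=
  (Submodule.mul_eq_span_mul_set E E).symm

theorem statement_12_general {σ K : Type u} [Field K] {V E : Submodule K (MvPolynomial σ K)}
    [FiniteDimensional K V] (h1 : 1 ∈ V) (hE : IsConnectedToOne E) (hVE : V ≤ E)
    (hVX : ∀ i, ∀ v ∈ V, X i * v ∈ E) (L : MvPolynomial σ K →ₗ[K] K)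
    (hrankE : LinearMap.rank ((hankelForm L).restrict E)
      = LinearMap.rank ((hankelForm L).restrict V))
    (hrankV : LinearMap.rank ((hankelForm L).restrict V) = Module.rank K V) :
    (∃! T : MvPolynomial σ K →ₗ[K] K, (∀ p ∈ E * E, T p = L p) ∧
      LinearMap.rank (hankelForm T) = LinearMap.rank ((hankelForm L).restrict E)) ∧
    ∀ T : MvPolynomial σ K →ₗ[K] K, (∀ p ∈ E * E, T p = L p) →
      LinearMap.rank (hankelForm T) = LinearMap.rank ((hankelForm L).restrict E) →
      (LinearMap.ker (hankelForm T) : Set (MvPolynomial σ K)) =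
        Ideal.span (truncatedKer L E : Set (MvPolynomial σ K)) := by
  have h : IsFlat L V E := isFlat_of_rank_eq hVE hrankV (hrankE.trans hrankV)
  rw [hrankE, hrankV]
  have hker : ∀ T : MvPolynomial σ K →ₗ[K] K, (∀ p ∈ E * E, T p = L p) →
      (LinearMap.rank (hankelForm T) = Module.rank K V ↔
        hankelIdeal T = Ideal.span (truncatedKer L E : Set (MvPolynomial σ K))) := fun T hTL =>
    h.rank_hankelForm_eq_iff h1 hVX fun p hp q hq => hTL _ (Submodule.mul_mem_mul hp hq)
  obtain ⟨T, hTL, hT⟩ := h.exists_extension h1 hE hVX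
  have hTEE : ∀ p ∈ E * E, T p = L p := fun p hp =>
    (Submodule.mul_le.mpr hTL : E * E ≤ LinearMap.eqLocus T L) hp
  refine ⟨⟨T, ⟨hTEE, (hker T hTEE).mpr hT⟩, ?_⟩,
    fun T' hTL' hrank => congrArg SetLike.coe ((hker T' hTL').mp hrank)⟩
  rintro T' ⟨hTEE', hrank⟩
  refine h.extension_unique h1 hVX (fun v hv => ?_) ((hker T' hTEE').mp hrank) hT
  have hvEE : v ∈ E * E := mul_one v ▸ Submodule.mul_mem_mul (hVE hv) (hVE h1)
  rw [hTEE' v hvEE, hTEE v hvEE]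

theorem statement_12 {n : ℕ} (V E : Submodule ℝ (PolyR n))
    (hVfin : FiniteDimensional ℝ ↥V) (hEfin : FiniteDimensional ℝ ↥E)
    (hVc : ConnectedTo1 V) (hEc : ConnectedTo1 E)
    (hVE : V ≤ E) (hVp : prolong V ≤ E)
    (Λ : ↥(spanEE E) →ₗ[ℝ] ℝ)
    (hrank1 : HRank (spanEE E) E Λ mul_mem_spanEE
        = HRank (spanEE E) V Λ (fun p q hp hq => mul_mem_spanEE p q (hVE hp) (hVE hq)))
    (hrank2 : HRank (spanEE E) V Λ (fun p q hp hq => mul_mem_spanEE p q (hVE hp) (hVE hq))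
        = Module.rank ℝ ↥V) :
    (∃! Λt : PolyR n →ₗ[ℝ] ℝ,
        (∀ (p : PolyR n) (hp : p ∈ spanEE E), Λt p = Λ ⟨p, hp⟩) ∧
        Module.rank ℝ ↥(LinearMap.range (FullHankel Λt))
          = HRank (spanEE E) E Λ mul_mem_spanEE) ∧
    ∀ Λt : PolyR n →ₗ[ℝ] ℝ,
      (∀ (p : PolyR n) (hp : p ∈ spanEE E), Λt p = Λ ⟨p, hp⟩) →
      Module.rank ℝ ↥(LinearMap.range (FullHankel Λt))
          = HRank (spanEE E) E Λ mul_mem_spanEE →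
      (LinearMap.ker (FullHankel Λt) : Set (PolyR n))
        = ↑(Ideal.span (↑(HKer (spanEE E) E Λ mul_mem_spanEE) : Set (PolyR n))) := by
  obtain ⟨L, rfl⟩ : ∃ L : PolyR n →ₗ[ℝ] ℝ, L.domRestrict (spanEE E) = Λ := Λ.exists_extend
  have hgen := statement_12_general hVc.1 hEc.isConnectedToOne hVE
    (fun i v hv => hVp (X_mul_mem_prolong hv i)) L hrank1 hrank2
  rwa [← spanEE_eq_mul] at hgen

end
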